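/- Fix an integer k ≥ 2. For every ε > 0 there exists N such that for all n ≥ N the following holds: if G is a finite simple graph on n vertices with no isolated vertices whose edge polytope P(G) is k-neighborly, then P(G) has at most (1/2)·n^{1+1/k} + ((k−1)/(2k) + ε)·n vertices (equivalently, G has at most that many edges). -/

import Mathlib

open Set

/-- The edge polytope of a graph `G` on the vertex set `Fin n`. -/
def edgePolytope {n : ℕ} (G : SimpleGraph (Fin n)) : Set (Fin n → ℝ) :=
  convexHull ℝ {x | ∃ i j : Fin n, G.Adj i j ∧ x = Pi.single i 1 + Pi.single j 1}

/-- A polytope `P` is `k`-neighborly if every set of at most `k` of its vertices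
(extreme points) is the vertex set of a face of `P`, a face being the intersection of
`P` with a supporting hyperplane (`IsExposed`), together with `∅` and `P` itself. -/
def KNeighborly {n : ℕ} (P : Set (Fin n → ℝ)) (k : ℕ) : Prop :=
  ∀ S : Set (Fin n → ℝ), S ⊆ Set.extremePoints ℝ P → S.Finite → S.ncard ≤ k →
    ∃ F : Set (Fin n → ℝ), IsExposed ℝ P F ∧ F ∩ Set.extremePoints ℝ P = S

/-- Paths with at most `k` edges, as duplicate-free lists of vertices, are determined by their
length and their two ends. -/
def UniquePaths {V : Type*} (G : SimpleGraph V) (k : ℕ) : Prop :=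
  ∀ l l' : List V, l.Nodup → l'.Nodup → l.IsChain G.Adj → l'.IsChain G.Adj →
    l.length = l'.length → l.length ≤ k + 1 → l.head? = l'.head? → l.getLast? = l'.getLast? →
    l = l'

section Polytope

variable {n : ℕ}

/-- The vertex of the edge polytope given by an edge. -/
def edgeVec (e : Fin n × Fin n) : Fin n → ℝ := Pi.single e.1 1 + Pi.single e.2 1

lemma edgeVec_apply (e : Fin n × Fin n) (i : Fin n) :
    edgeVec e i = (if i = e.1 then 1 else 0) + (if i = e.2 then 1 else 0) := by
  simp [edgeVec, Pi.single_apply]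

lemma edgeVec_mem {G : SimpleGraph (Fin n)} {e : Fin n × Fin n} (he : G.Adj e.1 e.2) :
    edgeVec e ∈ edgePolytope G :=
  subset_convexHull ℝ _ ⟨e.1, e.2, he, rfl⟩

lemma edgePolytope_subset_Icc (G : SimpleGraph (Fin n)) : edgePolytope G ⊆ Icc 0 1 := by
  refine convexHull_min ?_ (convex_Icc 0 1)
  rintro x ⟨i, j, h, rfl⟩
  have hne := h.ne
  constructor <;> intro t <;> simp only [Pi.add_apply, Pi.single_apply, Pi.zero_apply, Pi.one_apply]
    <;> split_ifs <;> simp_all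

lemma edgeVec_mem_extremePoints {G : SimpleGraph (Fin n)} {e : Fin n × Fin n}
    (he : G.Adj e.1 e.2) : edgeVec e ∈ extremePoints ℝ (edgePolytope G) := by
  refine ⟨edgeVec_mem he, ?_⟩
  rintro y hy z hz ⟨a, b, ha, hb, hab, h⟩
  have hy := edgePolytope_subset_Icc G hy
  have hz := edgePolytope_subset_Icc G hz
  have key : ∀ i, y i = edgeVec e i := by
    intro i
    have h1 : a * y i + b * z i = edgeVec e i := by rw [← h]; simp
    have hne := he.ne
    have y0 : 0 ≤ y i := hy.1 i
    have z0 : 0 ≤ z i := hz.1 i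
    have y1 : y i ≤ 1 := hy.2 i
    have z1 : z i ≤ 1 := hz.2 i
    have : edgeVec e i = 0 ∨ edgeVec e i = 1 := by
      rw [edgeVec_apply]; split_ifs <;> simp_all
    rcases this with h0 | h0 <;> rw [h0] at h1 ⊢
    · have : a * y i = 0 := by nlinarith [mul_nonneg ha.le y0, mul_nonneg hb.le z0]
      rcases mul_eq_zero.1 this with h | h <;> linarith
    · have : a * (1 - y i) = 0 := by
        nlinarith [mul_nonneg ha.le (sub_nonneg.2 y1), mul_nonneg hb.le (sub_nonneg.2 z1)]
      rcases mul_eq_zero.1 this with h | h <;> linarith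
  exact funext key

lemma edgeVec_injective {e f : Fin n × Fin n} (h : edgeVec e = edgeVec f) (he : e.1 ≠ e.2) :
    s(e.1, e.2) = s(f.1, f.2) := by
  have h1 := congrFun h e.1
  have h2 := congrFun h e.2
  simp only [edgeVec_apply] at h1 h2
  rw [Sym2.eq_iff]
  by_cases a : e.1 = f.1 <;> by_cases b : e.1 = f.2 <;> by_cases c : e.2 = f.1 <;>
    by_cases d : e.2 = f.2 <;> simp_all

lemma List.eq_of_length_mul_le_sum {α : Type*} {g : α → ℝ} {M : ℝ} {A : List α}
    (h : ∀ x ∈ A, g x ≤ M) (hs : A.length * M ≤ (A.map g).sum) : ∀ x ∈ A, g x = M := by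
  induction A with
  | nil => simp
  | cons a A ih =>
    have h1 : (A.map g).sum ≤ A.length * M := by
      have := List.sum_le_card_nsmul (A.map g) M (by simpa using fun x hx => h x (by simp [hx]))
      simpa using this
    have h2 := h a (by simp)
    simp only [List.length_cons, List.map_cons, List.sum_cons] at hs
    push_cast at hs
    have h3 := ih (fun x hx => h x (by simp [hx])) (by linarith)
    intro x hx
    rcases List.mem_cons.1 hx with rfl | hx
    · linarith
    · exact h3 x hx

lemma KNeighborly.mem_of_sum_eq {G : SimpleGraph (Fin n)} {k : ℕ}
    (hG : KNeighborly (edgePolytope G) k) {A B : List (Fin n × Fin n)}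
    (hA : ∀ e ∈ A, G.Adj e.1 e.2) (hB : ∀ e ∈ B, G.Adj e.1 e.2)
    (hlen : A.length = B.length) (hk : B.length ≤ k)
    (hsum : (A.map edgeVec).sum = (B.map edgeVec).sum) :
    ∀ e ∈ A, ∃ f ∈ B, s(e.1, e.2) = s(f.1, f.2) := by
  intro e he
  have hBpos : 0 < B.length := hlen ▸ List.length_pos_of_mem he
  obtain ⟨b, hb⟩ := List.exists_mem_of_length_pos hBpos
  classical
  have hS : {x | ∃ f ∈ B, edgeVec f = x} = ((B.map edgeVec).toFinset : Set (Fin n → ℝ)) := by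
    ext; simp
  obtain ⟨F, hF, hFS⟩ := hG {x | ∃ f ∈ B, edgeVec f = x}
    (by rintro _ ⟨f, hf, rfl⟩; exact edgeVec_mem_extremePoints (hB f hf))
    (by rw [hS]; exact Finset.finite_toSet _)
    (by
      rw [hS, Set.ncard_coe_finset]
      exact ((List.toFinset_card_le _).trans (by simp)).trans hk)
  have hBF : ∀ f ∈ B, edgeVec f ∈ F := fun f hf =>
    (hFS.symm.subset ⟨f, hf, rfl⟩ : _ ∈ F ∩ _).1
  obtain ⟨φ, hφ⟩ := hF ⟨_, hBF b hb⟩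
  have hmax : ∀ f ∈ B, ∀ y ∈ edgePolytope G, φ y ≤ φ (edgeVec f) := by
    intro f hf y hy
    have := hBF f hf
    rw [hφ] at this
    exact this.2 y hy
  have hBeq : ∀ f ∈ B, φ (edgeVec f) = φ (edgeVec b) := fun f hf =>
    le_antisymm (hmax b hb _ (edgeVec_mem (hB f hf))) (hmax f hf _ (edgeVec_mem (hB b hb)))
  have hsumB : (B.map (fun f => φ (edgeVec f))).sum = B.length * φ (edgeVec b) := by
    rw [List.map_congr_left hBeq]; simp
  have hsumA : (A.map (fun f => φ (edgeVec f))).sum = (B.map (fun f => φ (edgeVec f))).sum := by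
    have := congrArg φ hsum
    rw [map_list_sum, map_list_sum, List.map_map, List.map_map] at this
    exact this
  have heq := List.eq_of_length_mul_le_sum (g := fun f => φ (edgeVec f)) (M := φ (edgeVec b))
    (fun f hf => hmax b hb _ (edgeVec_mem (hA f hf))) (by rw [hsumA, hsumB, hlen]) e he
  have heF : edgeVec e ∈ F := by
    rw [hφ]
    refine ⟨edgeVec_mem (hA e he), fun y hy => ?_⟩
    have := hmax b hb y hy
    exact this.trans heq.ge
  obtain ⟨f, hf, hfe⟩ := hFS.subset ⟨heF, edgeVec_mem_extremePoints (hA e he)⟩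
  exact ⟨f, hf, edgeVec_injective hfe.symm (hA e he).ne⟩

end Polytope

section Alternating

/-- Every second edge of a walk, beginning with the first one if the flag is `true` and with the
second one otherwise. -/
def alternateEdges {V : Type*} : Bool → List V → List (V × V)
  | _, [] => []
  | _, [_] => []
  | true, a :: b :: l => (a, b) :: alternateEdges false (b :: l)
  | false, _ :: b :: l => alternateEdges true (b :: l)

variable {V : Type*}

lemma length_alternateEdges (l : List V) :
    (alternateEdges true l).length = l.length / 2 ∧
      (alternateEdges false l).length = (l.length - 1) / 2 := by
  induction l with
  | nil => simp [alternateEdges]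
  | cons a t ih =>
    cases t with
    | nil => simp [alternateEdges]
    | cons b t =>
      simp only [alternateEdges, List.length_cons] at ih ⊢
      omega

lemma mem_of_mem_alternateEdges {l : List V} :
    ∀ {p : Bool} {e : V × V}, e ∈ alternateEdges p l → e.1 ∈ l ∧ e.2 ∈ l := by
  induction l with
  | nil => simp [alternateEdges]
  | cons a t ih =>
    cases t with
    | nil => simp [alternateEdges]
    | cons b t =>
      intro p e he
      cases p with
      | true =>
        rcases List.mem_cons.1 he with rfl | he
        · simp
        · exact ⟨List.mem_cons_of_mem _ (ih he).1, List.mem_cons_of_mem _ (ih he).2⟩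
      | false => exact ⟨List.mem_cons_of_mem _ (ih he).1, List.mem_cons_of_mem _ (ih he).2⟩

lemma adj_of_mem_alternateEdges {G : SimpleGraph V} {l : List V} (hl : l.IsChain G.Adj) :
    ∀ {p : Bool} {e : V × V}, e ∈ alternateEdges p l → G.Adj e.1 e.2 := by
  induction l with
  | nil => simp [alternateEdges]
  | cons a t ih =>
    cases t with
    | nil => simp [alternateEdges]
    | cons b t =>
      rw [List.isChain_cons_cons] at hl
      intro p e he
      cases p with
      | true =>
        rcases List.mem_cons.1 he with rfl | he
        · exact hl.1
        · exact ih hl.2 he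
      | false => exact ih hl.2 he

lemma sum_alternateEdges {n : ℕ} (a : Fin n) (l : List (Fin n)) :
    ((alternateEdges true (a :: l)).map edgeVec).sum
      - ((alternateEdges false (a :: l)).map edgeVec).sum
      = Pi.single a 1 - (-1 : ℝ) ^ l.length • Pi.single ((a :: l).getLast (by simp)) 1 := by
  induction l generalizing a with
  | nil => simp [alternateEdges]
  | cons b t ih =>
    have := ih b
    simp only [alternateEdges, List.map_cons, List.sum_cons, List.length_cons, edgeVec,
      List.getLast_cons_cons, pow_succ] at this ⊢
    rw [add_sub_assoc, ← neg_sub, this]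
    simp only [mul_neg, mul_one, neg_smul]
    abel

lemma KNeighborly.uniquePaths {n k : ℕ} {G : SimpleGraph (Fin n)}
    (hG : KNeighborly (edgePolytope G) k) : UniquePaths G k := by
  intro l
  induction l with
  | nil =>
    intro l' _ _ _ _ h _ _ _
    exact (List.length_eq_zero_iff.1 h.symm).symm
  | cons a t ih =>
    intro l' hl hl' hc hc' hlen hk hhead hlast
    obtain ⟨t', rfl⟩ : ∃ t', l' = a :: t' := by
      cases l' with
      | nil => simp at hlen
      | cons b t' => simp at hhead; exact ⟨t', by rw [hhead]⟩
    cases t with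
    | nil =>
      have : t' = [] := List.length_eq_zero_iff.1 (by simpa using hlen.symm)
      rw [this]
    | cons b t =>
      cases t' with
      | nil => simp at hlen
      | cons b' t' =>
        have h1 := sum_alternateEdges a (b :: t)
        have h2 := sum_alternateEdges a (b' :: t')
        have hlast' : (a :: b :: t).getLast (by simp) = (a :: b' :: t').getLast (by simp) := by
          rw [List.getLast?_eq_some_getLast (by simp), List.getLast?_eq_some_getLast (by simp)]
            at hlast
          exact Option.some.inj hlast
        have hlen' : (b :: t).length = (b' :: t').length := by simpa using hlen
        rw [hlast', hlen', ← h2] at h1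
        have n1 := length_alternateEdges (a :: b :: t)
        have n2 := length_alternateEdges (a :: b' :: t')
        have key := hG.mem_of_sum_eq
          (A := alternateEdges true (a :: b :: t) ++ alternateEdges false (a :: b' :: t'))
          (B := alternateEdges false (a :: b :: t) ++ alternateEdges true (a :: b' :: t'))
          (fun e he => (List.mem_append.1 he).elim (adj_of_mem_alternateEdges hc)
            (adj_of_mem_alternateEdges hc'))
          (fun e he => (List.mem_append.1 he).elim (adj_of_mem_alternateEdges hc)
            (adj_of_mem_alternateEdges hc'))
          (by rw [List.length_append, List.length_append]; simp only [List.length_cons] at *; omega)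
          (by rw [List.length_append]; simp only [List.length_cons] at *; omega)
          (by
            rw [List.map_append, List.map_append, List.sum_append, List.sum_append]
            exact (sub_eq_sub_iff_add_eq_add.1 h1).trans (add_comm _ _))
          (a, b) (by simp [alternateEdges])
        obtain ⟨f, hf, hfe⟩ := key
        have ha : a ∉ b :: t := (List.nodup_cons.1 hl).1
        have ha' : a ∉ b' :: t' := (List.nodup_cons.1 hl').1
        have haf : a = f.1 ∨ a = f.2 := by
          have : a ∈ s(f.1, f.2) := hfe ▸ Sym2.mem_mk_left a b
          simpa using this
        have hbb : b = b' := by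
          rcases List.mem_append.1 hf with hf | hf
          · have := mem_of_mem_alternateEdges (l := b :: t) (p := true) hf
            rcases haf with rfl | rfl
            · exact absurd this.1 ha
            · exact absurd this.2 ha
          · rcases List.mem_cons.1 hf with rfl | hf
            · rcases Sym2.eq_iff.1 hfe with h | h
              · exact h.2
              · exact h.2.trans h.1
            · have := mem_of_mem_alternateEdges (l := b' :: t') (p := false) hf
              rcases haf with rfl | rfl
              · exact absurd this.1 ha'
              · exact absurd this.2 ha'
        subst hbb
        congr 1
        exact ih (b :: t') (List.nodup_cons.1 hl).2 (List.nodup_cons.1 hl').2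
          (List.isChain_cons_cons.1 hc).2 (List.isChain_cons_cons.1 hc').2 hlen'
          (by simp at hk ⊢; omega) rfl (by simpa using hlast)

end Alternating

section Walks

variable {V : Type*}

/-- Non-backtracking walks of a graph, as lists of vertices. -/
def IsNonBacktracking (G : SimpleGraph V) : List V → Prop
  | [] => True
  | [_] => True
  | a :: b :: l => G.Adj a b ∧ l.head? ≠ some a ∧ IsNonBacktracking G (b :: l)

lemma IsNonBacktracking.tail {G : SimpleGraph V} {a : V} {l : List V}
    (h : IsNonBacktracking G (a :: l)) : IsNonBacktracking G l := by
  cases l with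
  | nil => trivial
  | cons b l => exact h.2.2

lemma IsNonBacktracking.drop {G : SimpleGraph V} {l : List V} (h : IsNonBacktracking G l)
    (i : ℕ) : IsNonBacktracking G (l.drop i) := by
  induction i generalizing l with
  | zero => simpa
  | succ i ih =>
    cases l with
    | nil => simpa
    | cons a l => exact ih h.tail

lemma IsNonBacktracking.isChain {G : SimpleGraph V} {l : List V} (h : IsNonBacktracking G l) :
    l.IsChain G.Adj := by
  induction l with
  | nil => simp
  | cons a l ih =>
    cases l with
    | nil => simp
    | cons b l => exact List.isChain_cons_cons.2 ⟨h.1, ih h.2.2⟩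

variable [Fintype V]

open Classical in
/-- The lists of `m + 1` vertices with property `p`. -/
noncomputable def vertexLists (m : ℕ) (p : List V → Prop) : Finset (List V) :=
  (List.finite_length_eq V (m + 1)).toFinset.filter p

lemma mem_vertexLists {m : ℕ} {p : List V → Prop} {l : List V} :
    l ∈ vertexLists m p ↔ l.length = m + 1 ∧ p l := by
  simp [vertexLists]

variable {G : SimpleGraph V}

lemma card_nodup_le {k : ℕ} (hG : UniquePaths G k) :
    (vertexLists k (fun l => IsNonBacktracking G l ∧ l.Nodup)).card ≤ Fintype.card V ^ 2 := by
  rcases isEmpty_or_nonempty V with hV | ⟨⟨v₀⟩⟩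
  · rw [Finset.card_eq_zero.2]
    · simp
    · rw [Finset.eq_empty_iff_forall_notMem]
      intro l hl
      match l, (mem_vertexLists.1 hl).1 with
      | a :: _, _ => exact hV.elim a
  rw [sq, ← Fintype.card_prod, ← Finset.card_univ]
  refine Finset.card_le_card_of_injOn (fun l => (l.headD v₀, l.getLastD v₀)) (by simp) ?_
  intro l hl l' hl' h
  obtain ⟨hlen, hnb, hnd⟩ := mem_vertexLists.1 hl
  obtain ⟨hlen', hnb', hnd'⟩ := mem_vertexLists.1 hl'
  have h0 : l ≠ [] := by rintro rfl; simp at hlen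
  have h0' : l' ≠ [] := by rintro rfl; simp at hlen'
  simp only [Prod.mk.injEq] at h
  refine hG l l' hnd hnd' hnb.isChain hnb'.isChain (hlen.trans hlen'.symm) hlen.le ?_ ?_
  · have := h.1
    rw [List.headD_eq_head?_getD, List.headD_eq_head?_getD, List.head?_eq_some_head h0,
      List.head?_eq_some_head h0'] at this
    rw [List.head?_eq_some_head h0, List.head?_eq_some_head h0']
    exact congrArg some this
  · have := h.2
    rw [List.getLastD_eq_getLast?, List.getLastD_eq_getLast?, List.getLast?_eq_some_getLast h0,
      List.getLast?_eq_some_getLast h0'] at this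
    rw [List.getLast?_eq_some_getLast h0, List.getLast?_eq_some_getLast h0']
    exact congrArg some this

variable [DecidableEq V] [DecidableRel G.Adj]

lemma card_le_mul_of_cons {S T : Finset (List V)} {D : ℕ} (hD : ∀ v, G.degree v ≤ D)
    (h : ∀ l ∈ S, ∃ a b t, l = a :: b :: t ∧ b :: t ∈ T ∧ G.Adj a b) :
    S.card ≤ T.card * D := by
  have hsub : S ⊆ T.biUnion
      (fun t => (t.head?.elim (∅ : Finset V) fun v => G.neighborFinset v).image (fun a => a :: t)) := by
    intro l hl
    obtain ⟨a, b, t, rfl, ht, hab⟩ := h l hl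
    exact Finset.mem_biUnion.2 ⟨b :: t, ht, Finset.mem_image.2 ⟨a, by simpa using hab.symm, rfl⟩⟩
  refine (Finset.card_le_card hsub).trans (Finset.card_biUnion_le_card_mul _ _ _ ?_)
  intro t _
  refine Finset.card_image_le.trans ?_
  cases t with
  | nil => simp
  | cons b t => simpa using hD b

lemma card_nonBacktracking_le {D : ℕ} (hD : ∀ v, G.degree v ≤ D) (m : ℕ) :
    (vertexLists m (IsNonBacktracking G)).card ≤ Fintype.card V * D ^ m := by
  induction m with
  | zero =>
    rw [pow_zero, mul_one, ← Finset.card_univ]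
    refine (Finset.card_le_card (t := Finset.univ.image (fun v : V => [v])) ?_).trans
      Finset.card_image_le
    intro l hl
    obtain ⟨v, rfl⟩ := List.length_eq_one_iff.1 (mem_vertexLists.1 hl).1
    simp
  | succ m ih =>
    rw [pow_succ, ← mul_assoc]
    refine (card_le_mul_of_cons hD ?_).trans (Nat.mul_le_mul_right D ih)
    intro l hl
    obtain ⟨hlen, hnb⟩ := mem_vertexLists.1 hl
    match l, hlen, hnb with
    | a :: b :: t, hlen, hnb =>
      exact ⟨a, b, t, rfl, mem_vertexLists.2 ⟨by simpa using hlen, hnb.tail⟩, hnb.1⟩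

lemma card_nodup_tail_le {k m D : ℕ} (hG : UniquePaths G k) (hm : m + 1 ≤ k)
    (hD : ∀ v, G.degree v ≤ D) (hD0 : 0 < D) :
    (vertexLists (m + 1)
      (fun l => IsNonBacktracking G l ∧ l.tail.Nodup ∧ ¬ l.Nodup)).card
      ≤ m * (Fintype.card V * D ^ (m - 1)) := by
  classical
  set S := vertexLists (m + 1)
    (fun l : List V => IsNonBacktracking G l ∧ l.tail.Nodup ∧ ¬ l.Nodup)
  have hS : ∀ l ∈ S, ∃ i ∈ Finset.Icc 2 m, ∃ a t, l = a :: t ∧ i < t.length ∧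
      t[i]? = some a ∧ a ∉ t.take i := by
    intro l hl
    obtain ⟨hlen, hnb, htail, hnd⟩ := mem_vertexLists.1 hl
    match l, hlen, hnb, htail, hnd with
    | a :: t, hlen, hnb, htail, hnd =>
      have hat : a ∈ t := by
        by_contra h
        exact hnd (List.nodup_cons.2 ⟨h, htail⟩)
      have hlt := List.idxOf_lt_length_of_mem hat
      have hget : t[t.idxOf a]? = some a := by
        rw [List.getElem?_eq_getElem hlt, List.getElem_idxOf]
      refine ⟨t.idxOf a, ?_, a, t, rfl, hlt, hget, ?_⟩
      · simp only [List.length_cons] at hlen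
        refine Finset.mem_Icc.2 ⟨?_, by omega⟩
        by_contra! h
        match t, hnb, hget, h with
        | b :: t, hnb, hget, h =>
          interval_cases hi : (b :: t).idxOf a
          · simp at hget
            exact hnb.1.ne hget.symm
          · rw [List.getElem?_cons_succ, ← List.head?_eq_getElem?] at hget
            exact hnb.2.1 hget
      · intro h
        obtain ⟨j, hj, hja⟩ := List.getElem_of_mem h
        rw [List.getElem_take] at hja
        have hj' : j < t.idxOf a := by
          rw [List.length_take] at hj; omega
        have := List.not_of_lt_findIdx (p := (· == a)) (xs := t) hj'
        simp [hja] at this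
  have hcover : S ⊆ (Finset.Icc 2 m).biUnion (fun i => S.filter (fun l => ∃ a t, l = a :: t ∧
      i < t.length ∧ t[i]? = some a ∧ a ∉ t.take i)) := by
    intro l hl
    obtain ⟨i, hi, h⟩ := hS l hl
    exact Finset.mem_biUnion.2 ⟨i, hi, Finset.mem_filter.2 ⟨hl, h⟩⟩
  have hcard : ∀ i ∈ Finset.Icc 2 m, (S.filter (fun l => ∃ a t, l = a :: t ∧
      i < t.length ∧ t[i]? = some a ∧ a ∉ t.take i)).card ≤ Fintype.card V * D ^ (m - 1) := by
    intro i hi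
    rw [Finset.mem_Icc] at hi
    have h1 : (vertexLists (m + 1 - i) (IsNonBacktracking G)).card
        ≤ Fintype.card V * D ^ (m - 1) :=
      (card_nonBacktracking_le hD _).trans
        (Nat.mul_le_mul_left _ (Nat.pow_le_pow_right hD0 (by omega)))
    refine le_trans (Finset.card_le_card_of_injOn (List.drop i) ?_ ?_) h1
    · intro l hl
      obtain ⟨hlen, hnb, _⟩ := mem_vertexLists.1 (Finset.mem_filter.1 hl).1
      exact mem_vertexLists.2 ⟨by rw [List.length_drop, hlen]; omega, hnb.drop i⟩
    · intro l hl l' hl' hdrop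
      obtain ⟨hlS, a, t, rfl, hit, hget, hat⟩ := Finset.mem_filter.1 hl
      obtain ⟨hlS', a', t', rfl, hit', hget', hat'⟩ := Finset.mem_filter.1 hl'
      obtain ⟨hlen, hnb, hnd, _⟩ := mem_vertexLists.1 hlS
      obtain ⟨hlen', hnb', hnd', _⟩ := mem_vertexLists.1 hlS'
      have haa : a = a' := by
        have := congrArg (fun x : List V => x[1]?) hdrop
        simp only [List.getElem?_drop, List.getElem?_cons_succ] at this
        rw [hget, hget'] at this
        exact Option.some.inj this
      have hlast := congrArg (fun x : List V => x[0]?) hdrop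
      simp only [List.getElem?_drop, add_zero] at hlast
      have htake := hG ((a :: t).take (i + 1)) ((a' :: t').take (i + 1))
        (by
          rw [List.take_succ_cons]
          exact List.nodup_cons.2 ⟨hat, hnd.sublist (List.take_sublist _ _)⟩)
        (by
          rw [List.take_succ_cons]
          exact List.nodup_cons.2 ⟨hat', hnd'.sublist (List.take_sublist _ _)⟩)
        (hnb.isChain.take _) (hnb'.isChain.take _)
        (by rw [List.length_take, List.length_take, hlen, hlen'])
        (by rw [List.length_take]; omega)
        (by simpa using haa)
        (by
          rw [List.getLast?_eq_getElem?, List.getLast?_eq_getElem?, List.length_take,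
            List.length_take, hlen, hlen', min_eq_left (by omega), Nat.add_sub_cancel,
            List.getElem?_take_of_lt (by omega), List.getElem?_take_of_lt (by omega), hlast])
      have htake' : (a :: t).take i = (a' :: t').take i := by
        have := congrArg (List.take i) htake
        rwa [List.take_take, List.take_take, min_eq_left (Nat.le_succ i)] at this
      rw [← List.take_append_drop i (a :: t), ← List.take_append_drop i (a' :: t'), htake', hdrop]
  refine (Finset.card_le_card hcover).trans ((Finset.card_biUnion_le_card_mul _ _ _ hcard).trans ?_)
  refine Nat.mul_le_mul_right _ ?_
  rw [Nat.card_Icc]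
  omega

lemma card_not_nodup_le {k m D : ℕ} (hG : UniquePaths G k) (hm : m + 2 ≤ k)
    (hD : ∀ v, G.degree v ≤ D) (hD0 : 0 < D) :
    (vertexLists (m + 2) (fun l => IsNonBacktracking G l ∧ ¬ l.Nodup)).card
      ≤ (m + 2) ^ 2 * (Fintype.card V * D ^ m) := by
  induction m with
  | zero =>
    rw [Finset.card_eq_zero.2]
    · simp
    · rw [Finset.eq_empty_iff_forall_notMem]
      intro l hl
      obtain ⟨hlen, hnb, hnd⟩ := mem_vertexLists.1 hl
      match l, hlen, hnb, hnd with
      | [a, b, c], _, hnb, hnd =>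
        apply hnd
        have h1 := hnb.1.ne
        have h2 := hnb.2.1
        have h3 := hnb.2.2.1.ne
        simp at h2
        simp [h1, h3, Ne.symm h2]
  | succ m ih =>
    have h1 := ih (by omega)
    have h2 := card_nodup_tail_le (m := m + 2) hG hm hD hD0
    set T := vertexLists (m + 2) (fun l : List V => IsNonBacktracking G l ∧ ¬ l.Nodup)
    set A := vertexLists (m + 2 + 1)
      (fun l : List V => IsNonBacktracking G l ∧ l.tail.Nodup ∧ ¬ l.Nodup)
    set B := vertexLists (m + 2 + 1) (fun l : List V => IsNonBacktracking G l ∧ ¬ l.tail.Nodup)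
    have hB : B.card ≤ T.card * D := by
      refine card_le_mul_of_cons hD ?_
      intro l hl
      obtain ⟨hlen, hnb, hnd⟩ := mem_vertexLists.1 hl
      match l, hlen, hnb, hnd with
      | a :: b :: t, hlen, hnb, hnd =>
        exact ⟨a, b, t, rfl, mem_vertexLists.2 ⟨by simpa using hlen, hnb.tail, hnd⟩, hnb.1⟩
    have hsub : vertexLists (m + 1 + 2) (fun l : List V => IsNonBacktracking G l ∧ ¬ l.Nodup)
        ⊆ A ∪ B := by
      intro l hl
      obtain ⟨hlen, hnb, hnd⟩ := mem_vertexLists.1 hl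
      by_cases h : l.tail.Nodup
      · exact Finset.mem_union_left _ (mem_vertexLists.2 ⟨hlen, hnb, h, hnd⟩)
      · exact Finset.mem_union_right _ (mem_vertexLists.2 ⟨hlen, hnb, h⟩)
    refine (Finset.card_le_card hsub).trans ((Finset.card_union_le _ _).trans ?_)
    calc A.card + B.card
        ≤ (m + 2) * (Fintype.card V * D ^ (m + 1))
          + (m + 2) ^ 2 * (Fintype.card V * D ^ m) * D :=
          add_le_add h2 (hB.trans (Nat.mul_le_mul_right _ h1))
      _ = ((m + 2) + (m + 2) ^ 2) * (Fintype.card V * D ^ (m + 1)) := by ring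
      _ ≤ _ := Nat.mul_le_mul_right _ (by nlinarith)

lemma card_nonBacktracking_le_of_uniquePaths {k D : ℕ} (hG : UniquePaths G k) (hk : 2 ≤ k)
    (hD : ∀ v, G.degree v ≤ D) (hD0 : 0 < D) :
    (vertexLists k (IsNonBacktracking G)).card
      ≤ Fintype.card V ^ 2 + k ^ 2 * (Fintype.card V * D ^ (k - 2)) := by
  obtain ⟨m, rfl⟩ := Nat.exists_eq_add_of_le' hk
  have hsub : vertexLists (m + 2) (IsNonBacktracking G) ⊆
      vertexLists (m + 2) (fun l => IsNonBacktracking G l ∧ l.Nodup) ∪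
      vertexLists (m + 2) (fun l => IsNonBacktracking G l ∧ ¬ l.Nodup) := by
    intro l hl
    obtain ⟨hlen, hnb⟩ := mem_vertexLists.1 hl
    by_cases h : l.Nodup
    · exact Finset.mem_union_left _ (mem_vertexLists.2 ⟨hlen, hnb, h⟩)
    · exact Finset.mem_union_right _ (mem_vertexLists.2 ⟨hlen, hnb, h⟩)
  exact (Finset.card_le_card hsub).trans ((Finset.card_union_le _ _).trans
    (add_le_add (card_nodup_le hG) (card_not_nodup_le hG le_rfl hD hD0)))

lemma degree_mul_pow_le {k δ : ℕ} (hG : UniquePaths G k) (hk : 1 ≤ k)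
    (hδ : ∀ v, δ ≤ G.degree v) (x : V) :
    G.degree x * (δ - k) ^ (k - 1) ≤ Fintype.card V := by
  set P : ℕ → Finset (List V) := fun j =>
    vertexLists j (fun l => l.Nodup ∧ l.IsChain G.Adj ∧ l.getLast? = some x) with hP
  have step : ∀ j, j + 1 ≤ k → G.degree x * (δ - k) ^ j ≤ (P (j + 1)).card := by
    intro j
    induction j with
    | zero =>
      intro _
      rw [pow_zero, mul_one, ← G.card_neighborFinset_eq_degree]
      refine Finset.card_le_card_of_injOn (fun y => [y, x]) ?_ ?_
      · intro y hy
        have hy : G.Adj x y := by simpa using hy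
        exact mem_vertexLists.2 ⟨rfl, by simpa using hy.ne', by simpa using hy.symm, rfl⟩
      · intro y _ y' _ h
        simpa using h
    | succ j ih =>
      intro hj
      have hsub : (P (j + 1)).biUnion (fun l => ((l.head?.elim (∅ : Finset V) fun v => G.neighborFinset v) \ l.toFinset).image
          (fun a => a :: l)) ⊆ P (j + 1 + 1) := by
        intro l hl
        obtain ⟨t, ht, hl⟩ := Finset.mem_biUnion.1 hl
        obtain ⟨a, ha, rfl⟩ := Finset.mem_image.1 hl
        obtain ⟨hlen, hnd, hc, hlast⟩ := mem_vertexLists.1 ht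
        rw [Finset.mem_sdiff, List.mem_toFinset] at ha
        match t, hlen, hnd, hc, hlast, ha with
        | b :: t, hlen, hnd, hc, hlast, ha =>
          have hab : G.Adj b a := by simpa using ha.1
          refine mem_vertexLists.2 ⟨by simpa using hlen, List.nodup_cons.2 ⟨ha.2, hnd⟩,
            List.isChain_cons_cons.2 ⟨hab.symm, hc⟩, by simpa using hlast⟩
      refine le_trans ?_ (Finset.card_le_card hsub)
      rw [Finset.card_biUnion]
      · rw [pow_succ, ← mul_assoc]
        refine (Nat.mul_le_mul_right _ (ih (by omega))).trans ?_
        rw [← smul_eq_mul]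
        refine Finset.card_nsmul_le_sum _ _ _ ?_
        intro t ht
        obtain ⟨hlen, hnd, hc, hlast⟩ := mem_vertexLists.1 ht
        rw [Finset.card_image_of_injective _ (fun a b h => (List.cons.inj h).1)]
        match t, hlen with
        | b :: t, hlen =>
          refine le_trans ?_ (Finset.le_card_sdiff _ _)
          have h1 := List.toFinset_card_le (b :: t)
          have h2 := hδ b
          simp only [List.head?_cons, Option.elim_some, SimpleGraph.card_neighborFinset_eq_degree]
          omega
      · intro t _ t' _ htt
        rw [Function.onFun, Finset.disjoint_left]
        intro l hl hl'
        obtain ⟨a, _, rfl⟩ := Finset.mem_image.1 hl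
        obtain ⟨a', _, h⟩ := Finset.mem_image.1 hl'
        exact htt (List.cons.inj h).2.symm
  obtain ⟨j, rfl⟩ := Nat.exists_eq_add_of_le' hk
  refine (step j le_rfl).trans ?_
  rw [← Finset.card_univ]
  refine Finset.card_le_card_of_injOn (fun l => l.headD x) (by simp) ?_
  intro l hl l' hl' h
  obtain ⟨hlen, hnd, hc, hlast⟩ := mem_vertexLists.1 hl
  obtain ⟨hlen', hnd', hc', hlast'⟩ := mem_vertexLists.1 hl'
  refine hG l l' hnd hnd' hc hc' (hlen.trans hlen'.symm) hlen.le ?_ (hlast.trans hlast'.symm)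
  match l, l', hlen, hlen', h with
  | a :: _, b :: _, _, _, h => simpa using h

end Walks

section Counting

lemma sum_log_add_le {ι : Type*} {s : Finset ι} (hs : s.Nonempty) {a : ι → ℝ}
    (ha : ∀ i ∈ s, 0 < a i) :
    ∑ i ∈ s, Real.log (a i) + s.card * Real.log s.card ≤ s.card * Real.log (∑ i ∈ s, a i) := by
  have hc : (0 : ℝ) < s.card := by exact_mod_cast hs.card_pos
  have h := strictConcaveOn_log_Ioi.concaveOn.le_map_sum (t := s) (w := fun _ => (s.card : ℝ)⁻¹)
    (p := a) (fun _ _ => by positivity) (by simp [hc.ne']) (fun i hi => ha i hi)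
  simp only [smul_eq_mul, ← Finset.mul_sum] at h
  rw [Real.log_mul (by positivity) (Finset.sum_pos ha hs).ne', Real.log_inv] at h
  have h2 := mul_le_mul_of_nonneg_left h hc.le
  rw [mul_inv_cancel_left₀ hc.ne'] at h2
  linarith

lemma convexOn_add_one_mul_log : ConvexOn ℝ (Ici 1) fun y : ℝ => (y + 1) * Real.log y := by
  have hd : ∀ y : ℝ, 0 < y →
      HasDerivAt (fun y : ℝ => (y + 1) * Real.log y) (1 * Real.log y + (y + 1) * y⁻¹) y :=
    fun y hy => ((hasDerivAt_id y).add_const 1).mul (Real.hasDerivAt_log hy.ne')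
  refine MonotoneOn.convexOn_of_deriv (convex_Ici 1) ?_ ?_ ?_
  · intro y hy
    exact (hd y (by simp at hy; linarith)).continuousAt.continuousWithinAt
  · intro y hy
    rw [interior_Ici] at hy
    exact (hd y (by simp at hy; linarith)).differentiableAt.differentiableWithinAt
  · intro a ha b hb hab
    rw [interior_Ici, mem_Ioi] at ha hb
    have ha0 : 0 < a := by linarith
    have hb0 : 0 < b := by linarith
    rw [(hd a ha0).deriv, (hd b hb0).deriv, add_mul, add_mul, mul_inv_cancel₀ ha0.ne',
      mul_inv_cancel₀ hb0.ne']
    have h := Real.one_sub_inv_le_log_of_pos (div_pos hb0 ha0)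
    rw [Real.log_div hb0.ne' ha0.ne', inv_div] at h
    have h2 : a⁻¹ - b⁻¹ ≤ 1 - a / b := by
      have : 1 - a / b - (a⁻¹ - b⁻¹) = (b - a) * (a - 1) / (a * b) := by field_simp
      have : 0 ≤ (b - a) * (a - 1) / (a * b) :=
        div_nonneg (mul_nonneg (by linarith) (by linarith)) (by positivity)
      linarith
    linarith

variable {V : Type*} [Fintype V]

lemma mul_log_average_le {G : SimpleGraph V} [DecidableRel G.Adj] [Nonempty V]
    (hδ : ∀ v, 2 ≤ G.degree v) :
    (∑ v, (G.degree v : ℝ)) * Real.log ((∑ v, (G.degree v : ℝ)) / Fintype.card V - 1) ≤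
      ∑ v, (G.degree v : ℝ) * Real.log (G.degree v - 1) := by
  have hn : (0 : ℝ) < Fintype.card V := by exact_mod_cast Fintype.card_pos
  have h := convexOn_add_one_mul_log.map_sum_le (t := (Finset.univ : Finset V))
    (w := fun _ => (Fintype.card V : ℝ)⁻¹) (p := fun v => (G.degree v : ℝ) - 1)
    (fun _ _ => by positivity) (by simp [hn.ne'])
    (fun v _ => by
      have : (2 : ℝ) ≤ G.degree v := by exact_mod_cast hδ v
      rw [mem_Ici]; linarith)
  simp only [smul_eq_mul, ← Finset.mul_sum, Finset.sum_sub_distrib, sub_add_cancel] at h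
  have e : (Fintype.card V : ℝ)⁻¹ * (∑ v, (G.degree v : ℝ) - ∑ v : V, (1 : ℝ))
      = (∑ v, (G.degree v : ℝ)) / Fintype.card V - 1 := by
    simp only [Finset.sum_const, Finset.card_univ, nsmul_eq_mul]
    field_simp
  rw [e, sub_add_cancel] at h
  have h2 := mul_le_mul_of_nonneg_left h hn.le
  rw [mul_inv_cancel_left₀ hn.ne', ← mul_assoc, mul_div_cancel₀ _ hn.ne'] at h2
  exact h2

variable [DecidableEq V]

/-- The number of non-backtracking walks with `j + 1` edges that begin with two given vertices. -/
def nonBacktrackingCount (G : SimpleGraph V) [DecidableRel G.Adj] : ℕ → V → V → ℕ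
  | 0, _, _ => 1
  | j + 1, u, v => ∑ w ∈ (G.neighborFinset v).erase u, nonBacktrackingCount G j v w

variable {G : SimpleGraph V} [DecidableRel G.Adj]

lemma nonBacktrackingCount_le (j : ℕ) {u v : V} (huv : G.Adj u v) :
    nonBacktrackingCount G j u v ≤
      (vertexLists (j + 1) (fun l => IsNonBacktracking G l ∧ ∃ t, l = u :: v :: t)).card := by
  induction j generalizing u v with
  | zero =>
    rw [nonBacktrackingCount, Nat.one_le_iff_ne_zero, Finset.card_ne_zero]
    exact ⟨[u, v], mem_vertexLists.2 ⟨rfl, ⟨huv, by simp, trivial⟩, [], rfl⟩⟩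
  | succ j ih =>
    have hsub : ((G.neighborFinset v).erase u).biUnion (fun w =>
        (vertexLists (j + 1) (fun l => IsNonBacktracking G l ∧ ∃ t, l = v :: w :: t)).image
          (fun l => u :: l)) ⊆
        vertexLists (j + 1 + 1) (fun l => IsNonBacktracking G l ∧ ∃ t, l = u :: v :: t) := by
      intro l hl
      obtain ⟨w, hw, hl⟩ := Finset.mem_biUnion.1 hl
      obtain ⟨t, ht, rfl⟩ := Finset.mem_image.1 hl
      obtain ⟨hlen, hnb, t, rfl⟩ := mem_vertexLists.1 ht
      rw [Finset.mem_erase] at hw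
      exact mem_vertexLists.2 ⟨by simpa using hlen,
        ⟨huv, by simpa using hw.1, hnb⟩, w :: t, rfl⟩
    refine le_trans ?_ (Finset.card_le_card hsub)
    rw [nonBacktrackingCount, Finset.card_biUnion]
    · refine Finset.sum_le_sum fun w hw => ?_
      rw [Finset.card_image_of_injective _ (fun a b h => (List.cons.inj h).2)]
      exact ih (by simpa using (Finset.mem_erase.1 hw).2)
    · intro w _ w' _ hww
      rw [Function.onFun, Finset.disjoint_left]
      intro l hl hl'
      obtain ⟨t, ht, rfl⟩ := Finset.mem_image.1 hl
      obtain ⟨t', ht', h⟩ := Finset.mem_image.1 hl'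
      obtain ⟨-, -, t, rfl⟩ := mem_vertexLists.1 ht
      obtain ⟨-, -, t', rfl⟩ := mem_vertexLists.1 ht'
      simp only [List.cons.injEq, true_and] at h
      exact hww h.1.symm

lemma sum_nonBacktrackingCount_le (j : ℕ) :
    ∑ u, ∑ v ∈ G.neighborFinset u, nonBacktrackingCount G j u v ≤
      (vertexLists (j + 1) (IsNonBacktracking G)).card := by
  have hsub : (Finset.univ.sigma fun u => G.neighborFinset u).biUnion (fun x =>
      vertexLists (j + 1) (fun l => IsNonBacktracking G l ∧ ∃ t, l = x.1 :: x.2 :: t)) ⊆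
      vertexLists (j + 1) (IsNonBacktracking G) := by
    intro l hl
    obtain ⟨x, hx, hl⟩ := Finset.mem_biUnion.1 hl
    obtain ⟨hlen, hnb, -⟩ := mem_vertexLists.1 hl
    exact mem_vertexLists.2 ⟨hlen, hnb⟩
  refine le_trans ?_ (Finset.card_le_card hsub)
  rw [Finset.card_biUnion, Finset.sum_sigma]
  · exact Finset.sum_le_sum fun u _ => Finset.sum_le_sum fun v hv =>
      nonBacktrackingCount_le j (by simpa using hv)
  · rintro ⟨u, v⟩ _ ⟨u', v'⟩ _ hne
    rw [Function.onFun, Finset.disjoint_left]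
    intro l hl hl'
    obtain ⟨-, -, t, rfl⟩ := mem_vertexLists.1 hl
    obtain ⟨-, -, t', h⟩ := mem_vertexLists.1 hl'
    simp only [List.cons.injEq] at h
    obtain ⟨rfl, rfl, -⟩ := h
    exact hne rfl

lemma card_neighborFinset_erase {u v : V} (h : u ∈ G.neighborFinset v) :
    ((G.neighborFinset v).erase u).card = G.degree v - 1 := by
  rw [Finset.card_erase_of_mem h, G.card_neighborFinset_eq_degree]

lemma nonBacktrackingCount_pos (hδ : ∀ v, 2 ≤ G.degree v) (j : ℕ) {u v : V} (huv : G.Adj u v) :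
    0 < nonBacktrackingCount G j u v := by
  induction j generalizing u v with
  | zero => exact one_pos
  | succ j ih =>
    refine Finset.sum_pos (fun w hw => ih (by simpa using (Finset.mem_erase.1 hw).2)) ?_
    rw [← Finset.card_pos, card_neighborFinset_erase (by simpa using huv.symm)]
    have := hδ v
    omega

lemma mul_sum_log_le (hδ : ∀ v, 2 ≤ G.degree v) (j : ℕ) :
    j * ∑ v, (G.degree v : ℝ) * Real.log (G.degree v - 1) ≤
      ∑ v, ∑ u ∈ G.neighborFinset v, Real.log (nonBacktrackingCount G j u v) := by
  induction j with
  | zero => simp [nonBacktrackingCount]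
  | succ j ih =>
    have hswap : ∑ v, ∑ u ∈ G.neighborFinset v, Real.log (nonBacktrackingCount G j u v)
        = ∑ v, ∑ w ∈ G.neighborFinset v, Real.log (nonBacktrackingCount G j v w) :=
      Finset.sum_comm' (by simp [G.adj_comm])
    have hstep : ∀ v, ∑ w ∈ G.neighborFinset v, Real.log (nonBacktrackingCount G j v w)
        + G.degree v * Real.log (G.degree v - 1) ≤
        ∑ u ∈ G.neighborFinset v, Real.log (nonBacktrackingCount G (j + 1) u v) := by
      intro v
      have hd : (2 : ℝ) ≤ G.degree v := by exact_mod_cast hδ v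
      set S := ∑ w ∈ G.neighborFinset v, Real.log (nonBacktrackingCount G j v w) with hS
      have h1 : ∀ u ∈ G.neighborFinset v,
          S - Real.log (nonBacktrackingCount G j v u)
            + (G.degree v - 1) * Real.log (G.degree v - 1) ≤
          (G.degree v - 1) * Real.log (nonBacktrackingCount G (j + 1) u v) := by
        intro u hu
        have hcard := card_neighborFinset_erase hu
        have h2 := hδ v
        have := sum_log_add_le (s := (G.neighborFinset v).erase u)
          (a := fun w => (nonBacktrackingCount G j v w : ℝ))
          (by rw [← Finset.card_pos]; omega)
          (fun w hw => by
            exact_mod_cast nonBacktrackingCount_pos hδ j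
              (by simpa using (Finset.mem_erase.1 hw).2))
        rw [hcard, Nat.cast_sub (by omega), Nat.cast_one] at this
        rw [nonBacktrackingCount, Nat.cast_sum]
        have h3 := Finset.add_sum_erase _
          (fun w => Real.log (nonBacktrackingCount G j v w : ℝ)) hu
        rw [← hS] at h3
        linarith
      have h2 := Finset.sum_le_sum h1
      rw [Finset.sum_add_distrib, Finset.sum_sub_distrib, ← hS, ← Finset.mul_sum] at h2
      simp only [Finset.sum_const, G.card_neighborFinset_eq_degree, nsmul_eq_mul] at h2
      rw [← Finset.mul_sum] at h2
      have hpos : (0 : ℝ) < G.degree v - 1 := by linarith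
      refine le_of_mul_le_mul_left ?_ hpos
      linarith
    have := Finset.sum_le_sum fun v (_ : v ∈ Finset.univ) => hstep v
    rw [Finset.sum_add_distrib, ← hswap] at this
    push_cast
    linarith

/-- The lower bound of Alon, Hoory and Linial on the number of non-backtracking walks. -/
lemma mul_pow_le_card_nonBacktracking [Nonempty V] (hδ : ∀ v, 2 ≤ G.degree v) (j : ℕ) :
    (∑ v, (G.degree v : ℝ)) * ((∑ v, (G.degree v : ℝ)) / Fintype.card V - 1) ^ j ≤
      (vertexLists (j + 1) (IsNonBacktracking G)).card := by
  have hn : (0 : ℝ) < Fintype.card V := by exact_mod_cast Fintype.card_pos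
  set D := ∑ v, (G.degree v : ℝ) with hD
  have hD2 : 2 * (Fintype.card V : ℝ) ≤ D := by
    have := Finset.card_nsmul_le_sum (Finset.univ : Finset V) (fun v => (G.degree v : ℝ)) 2
      (fun v _ => by exact_mod_cast hδ v)
    rw [nsmul_eq_mul, Finset.card_univ] at this
    linarith
  have hD0 : 0 < D := by linarith
  have hd : 0 < D / Fintype.card V - 1 := by
    have : 2 ≤ D / Fintype.card V := by rwa [le_div_iff₀ hn]
    linarith
  set s := (Finset.univ : Finset V).sigma fun u => G.neighborFinset u with hs
  have hcard : (s.card : ℝ) = D := by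
    rw [hs, Finset.card_sigma, hD]; push_cast
    simp
  have hpos : ∀ x ∈ s, (0 : ℝ) < nonBacktrackingCount G j x.1 x.2 := fun x hx => by
    exact_mod_cast nonBacktrackingCount_pos hδ j (by simpa [hs] using hx)
  have hne : s.Nonempty := by
    rw [← Finset.card_pos]
    exact_mod_cast hcard ▸ hD0
  have h1 := sum_log_add_le hne hpos
  have h2 := mul_sum_log_le hδ j
  have h3 := mul_log_average_le hδ
  rw [← hD] at h3
  have hswap : ∑ v, ∑ u ∈ G.neighborFinset v, Real.log (nonBacktrackingCount G j u v)
      = ∑ x ∈ s, Real.log (nonBacktrackingCount G j x.1 x.2) := by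
    rw [hs, Finset.sum_sigma]
    exact Finset.sum_comm' (by simp [G.adj_comm])
  rw [hcard] at h1
  rw [hswap] at h2
  have h4 : D * Real.log (D * (D / Fintype.card V - 1) ^ j)
      ≤ D * Real.log (∑ x ∈ s, (nonBacktrackingCount G j x.1 x.2 : ℝ)) := by
    rw [Real.log_mul hD0.ne' (by positivity), Real.log_pow]
    have := mul_le_mul_of_nonneg_left h3 (Nat.cast_nonneg (α := ℝ) j)
    linarith
  have h5 := (Real.log_le_log_iff (by positivity) (Finset.sum_pos hpos hne)).1
    (le_of_mul_le_mul_left h4 hD0)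
  refine h5.trans ?_
  rw [hs, Finset.sum_sigma]
  exact_mod_cast sum_nonBacktrackingCount_le j

end Counting

section Reduction

lemma UniquePaths.of_embedding {V W : Type*} {G : SimpleGraph V} {H : SimpleGraph W} {k : ℕ}
    (hG : UniquePaths G k) (f : H ↪g G) : UniquePaths H k := by
  intro l l' hl hl' hc hc' hlen hk hhead hlast
  have hmap : ∀ {l : List W}, l.IsChain H.Adj → (l.map f).IsChain G.Adj := fun h =>
    List.isChain_map_of_isChain f (fun _ _ => f.map_adj_iff.2) h
  refine List.map_injective_iff.2 f.injective
    (hG (l.map f) (l'.map f) (hl.map f.injective) (hl'.map f.injective) (hmap hc) (hmap hc')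
      (by simpa using hlen) (by simpa using hk) ?_ ?_)
  · rw [List.head?_map, List.head?_map, hhead]
  · rw [List.getLast?_map, List.getLast?_map, hlast]

/-- A graph with average degree at least `2 * c` has an induced subgraph with the same property
and minimum degree at least `c`. -/
lemma exists_embedding_le_degree {c : ℝ} (hc : 0 < c) {V : Type} [Fintype V] [DecidableEq V]
    [Nonempty V] (G : SimpleGraph V) [DecidableRel G.Adj]
    (hG : c * Fintype.card V ≤ G.edgeFinset.card) :
    ∃ (W : Type) (_ : Fintype W) (_ : DecidableEq W) (H : SimpleGraph W)
      (_ : DecidableRel H.Adj), Nonempty W ∧ Nonempty (H ↪g G) ∧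
      c * Fintype.card W ≤ H.edgeFinset.card ∧ ∀ v, c ≤ H.degree v := by
  induction hN : Fintype.card V generalizing V with
  | zero => exact absurd hN Fintype.card_ne_zero
  | succ N ih =>
    by_cases hmin : ∀ v, c ≤ G.degree v
    · exact ⟨V, inferInstance, inferInstance, G, inferInstance, ‹_›, ⟨SimpleGraph.Embedding.refl⟩, hG, hmin⟩
    push Not at hmin
    obtain ⟨x, hx⟩ := hmin
    have he : (G.induce ({x}ᶜ : Set V)).edgeFinset.card = G.edgeFinset.card - G.degree x := by
      rw [G.card_edgeFinset_induce_compl_singleton, G.card_edgeFinset_deleteIncidenceSet]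
    have hcard : Fintype.card ({x}ᶜ : Set V) = N := by
      rw [Fintype.card_compl_set, hN]; simp
    have hle : c * N ≤ ((G.induce ({x}ᶜ : Set V)).edgeFinset.card : ℝ) := by
      have h1 : (G.edgeFinset.card : ℝ) ≤
          (G.induce ({x}ᶜ : Set V)).edgeFinset.card + G.degree x := by
        rw [he]; exact_mod_cast Nat.sub_le_iff_le_add.1 le_rfl
      rw [hN] at hG
      push_cast at hG
      linarith
    have hNpos : N ≠ 0 := by
      rintro rfl
      have h1 : Fintype.card V = 1 := hN
      have h2 := G.card_edgeFinset_le_card_choose_two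
      rw [h1, Nat.choose_eq_zero_of_lt one_lt_two, Nat.le_zero] at h2
      rw [h1, h2] at hG
      push_cast at hG
      linarith
    have : Nonempty ({x}ᶜ : Set V) := by
      rw [← Fintype.card_pos_iff, hcard]; omega
    obtain ⟨W, i1, i2, H, i3, hW, ⟨f⟩, h⟩ := ih (G.induce ({x}ᶜ : Set V)) (by rw [hcard]; exact hle)
      hcard
    exact ⟨W, i1, i2, H, i3, hW, ⟨f.trans (SimpleGraph.Embedding.induce _)⟩, h⟩

end Reduction

section Estimates

lemma uniquePaths_average_bound {V : Type*} [Fintype V] [DecidableEq V] [Nonempty V]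
    {G : SimpleGraph V} [DecidableRel G.Adj] {k : ℕ} {d : ℝ} (hG : UniquePaths G k) (hk : 2 ≤ k)
    (hd : 4 * k ≤ d) (hn : Fintype.card V ≤ d ^ k)
    (hE : d / 2 * Fintype.card V ≤ G.edgeFinset.card) (hδ : ∀ v, d / 2 ≤ G.degree v) :
    d * (d - 1) ^ (k - 1) ≤ Fintype.card V + k ^ 2 * (4 ^ (k - 1) * d) ^ (k - 2) := by
  obtain ⟨v₀⟩ := ‹Nonempty V›
  have : Nonempty V := ⟨v₀⟩
  have hn0 : (0 : ℝ) < Fintype.card V := by exact_mod_cast Fintype.card_pos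
  have hk2 : (2 : ℝ) ≤ k := by exact_mod_cast hk
  have hd0 : 0 < d := by linarith
  have hmin : d / 2 ≤ G.minDegree := by
    obtain ⟨v, hv⟩ := G.exists_minimal_degree_vertex
    rw [hv]; exact hδ v
  have hkmin : k ≤ G.minDegree := by
    have : (k : ℝ) ≤ G.minDegree := by linarith
    exact_mod_cast this
  have hmax : (G.maxDegree : ℝ) ≤ 4 ^ (k - 1) * d := by
    obtain ⟨x, hx⟩ := G.exists_maximal_degree_vertex
    have h1 := degree_mul_pow_le hG (by omega) G.minDegree_le_degree x
    rw [← hx] at h1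
    have h2 : (G.maxDegree : ℝ) * ((G.minDegree : ℝ) - k) ^ (k - 1) ≤ Fintype.card V := by
      rw [← Nat.cast_sub hkmin]; exact_mod_cast h1
    have h3 : (d / 4) ^ (k - 1) ≤ ((G.minDegree : ℝ) - k) ^ (k - 1) :=
      pow_le_pow_left₀ (by positivity) (by linarith) _
    have h4 : (G.maxDegree : ℝ) * (d / 4) ^ (k - 1) ≤ d * d ^ (k - 1) := by
      rw [← pow_succ', Nat.sub_add_cancel (by omega)]
      exact (mul_le_mul_of_nonneg_left h3 (Nat.cast_nonneg _)).trans (h2.trans hn)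
    rw [div_pow, mul_div_assoc', div_le_iff₀ (by positivity)] at h4
    have h5 : (0 : ℝ) < d ^ (k - 1) := by positivity
    nlinarith
  have hmax0 : 0 < G.maxDegree := by
    have := G.minDegree_le_degree v₀
    have := G.degree_le_maxDegree v₀
    omega
  have hupper := card_nonBacktracking_le_of_uniquePaths hG hk G.degree_le_maxDegree hmax0
  have hlower := mul_pow_le_card_nonBacktracking (G := G)
    (fun v => by have := G.minDegree_le_degree v; omega) (k - 1)
  rw [Nat.sub_add_cancel (by omega)] at hlower
  have hsum : d * Fintype.card V ≤ ∑ v, (G.degree v : ℝ) := by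
    have := G.sum_degrees_eq_twice_card_edges
    have : ∑ v, (G.degree v : ℝ) = 2 * G.edgeFinset.card := by exact_mod_cast this
    linarith
  have havg : d - 1 ≤ (∑ v, (G.degree v : ℝ)) / Fintype.card V - 1 := by
    rw [← le_div_iff₀ hn0] at hsum
    linarith
  have h1 : d * Fintype.card V * (d - 1) ^ (k - 1) ≤
      (Fintype.card V : ℝ) ^ 2 + k ^ 2 * (Fintype.card V * (G.maxDegree : ℝ) ^ (k - 2)) := by
    refine le_trans ?_ (hlower.trans (by exact_mod_cast hupper))
    have : 0 ≤ d - 1 := by linarith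
    gcongr
  have h2 : (G.maxDegree : ℝ) ^ (k - 2) ≤ (4 ^ (k - 1) * d) ^ (k - 2) :=
    pow_le_pow_left₀ (Nat.cast_nonneg _) hmax _
  have h3 : d * (d - 1) ^ (k - 1) ≤ Fintype.card V + k ^ 2 * (G.maxDegree : ℝ) ^ (k - 2) := by
    refine le_of_mul_le_mul_left ?_ hn0
    linarith
  refine h3.trans ?_
  gcongr

lemma exists_add_pow_le (b : ℝ) (m : ℕ) : ∃ K : ℝ, ∀ s : ℝ, 1 ≤ s → 0 ≤ s + b →
    (s + b) ^ (m + 2) ≤ s ^ (m + 2) + (m + 2) * b * s ^ (m + 1) + K * s ^ m := by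
  induction m with
  | zero => exact ⟨b ^ 2, fun s _ _ => by ring_nf; rfl⟩
  | succ m ih =>
    obtain ⟨K, hK⟩ := ih
    refine ⟨(m + 2) * b ^ 2 + K + |K * b|, fun s hs hsb => ?_⟩
    have h1 := mul_le_mul_of_nonneg_right (hK s hs hsb) hsb
    have h2 : K * b * s ^ m ≤ |K * b| * s ^ (m + 1) :=
      mul_le_mul (le_abs_self _) (pow_le_pow_right₀ hs (Nat.le_succ m)) (by positivity)
        (abs_nonneg _)
    rw [← pow_succ] at h1
    push_cast
    calc (s + b) ^ (m + 1 + 2) ≤ _ := h1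
      _ = s ^ (m + 1 + 2) + (m + 1 + 2) * b * s ^ (m + 1 + 1)
          + ((m + 2) * b ^ 2 + K) * s ^ (m + 1) + K * b * s ^ m := by ring
      _ ≤ _ := by linarith

lemma exists_forall_add_pow_lt {k : ℕ} (hk : 2 ≤ k) {ε : ℝ} (hε : 0 < ε) (C : ℝ) :
    ∃ s₀ : ℝ, ∀ s : ℝ, s₀ ≤ s → 0 ≤ s + (1 / k - 2 * ε) →
      (s + (1 / k - 2 * ε)) ^ k + C * s ^ (k - 2) < s ^ k + s ^ (k - 1) := by
  obtain ⟨m, rfl⟩ := Nat.exists_eq_add_of_le' hk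
  obtain ⟨K, hK⟩ := exists_add_pow_le (1 / ((m + 2 : ℕ) : ℝ) - 2 * ε) m
  refine ⟨max 1 ((K + C) / (2 * (m + 2) * ε) + 1), fun s hs hsb => ?_⟩
  have hs1 : 1 ≤ s := (le_max_left _ _).trans hs
  have hs2 : (K + C) / (2 * (m + 2) * ε) < s := by
    have := (le_max_right _ _).trans hs
    linarith
  rw [div_lt_iff₀ (by positivity)] at hs2
  have h1 := hK s hs1 hsb
  have h2 : ((m : ℝ) + 2) * (1 / ((m + 2 : ℕ) : ℝ) - 2 * ε) = 1 - 2 * (m + 2) * ε := by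
    push_cast; field_simp
  rw [h2] at h1
  have h3 := mul_lt_mul_of_pos_right hs2 (pow_pos (by linarith : 0 < s) m)
  have h4 : m + 2 - 1 = m + 1 := rfl
  rw [h4, Nat.add_sub_cancel]
  rw [pow_succ s m] at h1 ⊢
  linarith

end Estimates

/-- Fix `k ≥ 2`.  For every `ε > 0` there is an `N` such that for every `n ≥ N`, every
graph `G` on `n` vertices with no isolated vertices whose edge polytope is
`k`-neighborly has at most `(1/2) n^(1 + 1/k) + ((k-1)/(2k) + ε) n` edges; equivalently,
its edge polytope has at most that many vertices. -/
theorem kNeighborly_vertex_bound (k : ℕ) (hk : 2 ≤ k) :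
    ∀ ε : ℝ, 0 < ε → ∃ N : ℕ, ∀ n : ℕ, N ≤ n →
      ∀ G : SimpleGraph (Fin n), (∀ v : Fin n, ∃ w : Fin n, G.Adj v w) →
        KNeighborly (edgePolytope G) k →
          (G.edgeSet.ncard : ℝ) ≤
            (1 / 2) * (n : ℝ) ^ ((1 : ℝ) + 1 / (k : ℝ))
              + (((k : ℝ) - 1) / (2 * (k : ℝ)) + ε) * (n : ℝ) := by
  intro ε hε
  obtain ⟨s₀, hs₀⟩ := exists_forall_add_pow_lt hk hε (k ^ 2 * (4 ^ (k - 1) * 2) ^ (k - 2))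
  have hk2 : (2 : ℝ) ≤ k := by exact_mod_cast hk
  set T : ℝ := max (4 * k) (s₀ + 1) with hT
  have hT1 : 4 * (k : ℝ) ≤ T := le_max_left _ _
  have hT2 : s₀ + 1 ≤ T := le_max_right _ _
  refine ⟨⌈T ^ k⌉₊, fun n hn G _ hG => ?_⟩
  by_contra! hcon
  have hTn : T ^ k ≤ n := Nat.ceil_le.1 hn
  have hn0 : (0 : ℝ) < n := lt_of_lt_of_le (pow_pos (by linarith) k) hTn
  obtain ⟨t, ht0, htk, htn⟩ : ∃ t : ℝ, 0 ≤ t ∧ t ^ k = n ∧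
      (n : ℝ) ^ ((1 : ℝ) + 1 / (k : ℝ)) = n * t := by
    refine ⟨(n : ℝ) ^ (1 / (k : ℝ)), by positivity, ?_, ?_⟩
    · rw [one_div, Real.rpow_inv_natCast_pow hn0.le (by omega)]
    · rw [Real.rpow_add hn0, Real.rpow_one]
  have htT : T ≤ t := by
    refine le_of_pow_le_pow_left₀ (n := k) (by omega) ht0 ?_
    rw [htk]; exact hTn
  rw [htn] at hcon
  have hkinv : 1 / (k : ℝ) ≤ 1 := by rw [div_le_one (by linarith)]; linarith
  have hkinv0 : 0 ≤ 1 / (k : ℝ) := by positivity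
  set s : ℝ := t - 1 / k + 2 * ε with hs
  have hhalf : ((k : ℝ) - 1) / (2 * k) = (1 - 1 / k) / 2 := by field_simp
  rw [hhalf] at hcon
  have : Nonempty (Fin n) := ⟨⟨0, by exact_mod_cast hn0⟩⟩
  classical
  have hE : (s + 1) / 2 * Fintype.card (Fin n) ≤ G.edgeFinset.card := by
    rw [Set.ncard_eq_toFinset_card'] at hcon
    rw [Fintype.card_fin, SimpleGraph.edgeFinset, hs]
    linarith
  obtain ⟨W, _, _, H, _, hW, ⟨f⟩, hHE, hHδ⟩ :=
    exists_embedding_le_degree (c := (s + 1) / 2) (by linarith) G hE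
  have hcard : (Fintype.card W : ℝ) ≤ t ^ k := by
    rw [htk]
    have := Fintype.card_le_of_injective f f.injective
    rw [Fintype.card_fin] at this
    exact_mod_cast this
  have hmain := uniquePaths_average_bound (hG.uniquePaths.of_embedding f) hk (d := s + 1)
    (by linarith) (hcard.trans (pow_le_pow_left₀ ht0 (by linarith) _)) hHE hHδ
  have hst : s + (1 / k - 2 * ε) = t := by rw [hs]; ring
  have hlt := hs₀ s (by linarith) (by rw [hst]; exact ht0)
  rw [hst] at hlt
  have hpow : (4 ^ (k - 1) * (s + 1)) ^ (k - 2) ≤ (4 ^ (k - 1) * 2) ^ (k - 2) * s ^ (k - 2) := by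
    rw [← mul_pow, mul_assoc]
    have : 0 ≤ s + 1 := by linarith
    gcongr
    linarith
  have hpow' := mul_le_mul_of_nonneg_left hpow (sq_nonneg (k : ℝ))
  have hexp : (s + 1) * (s + 1 - 1) ^ (k - 1) = s ^ k + s ^ (k - 1) := by
    rw [add_sub_cancel_right, add_mul, one_mul, ← pow_succ', Nat.sub_add_cancel (by omega)]
  rw [hexp] at hmain
  linarith
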